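/- Let S_1,…,S_m be admissible sets of signed vectors in ℝ^n and let P := Δ⁰_{S_1} + ⋯ + Δ⁰_{S_m}. If T ∈ AdS_n is such that P_T := Δ⁰_{S_1∩T} + ⋯ + Δ⁰_{S_m∩T} is n-dimensional, then the number of lattice points in the Minkowski difference P_T − □_T equals the number of 0/1-sequences (a_1,…,a_m) ∈ {0,1}^m with a_1 + ⋯ + a_m = n such that Σ_{i∈I} a_i ≤ |⋃_{i∈I} S_i ∩ T| for every nonempty subset I ⊆ [m]; i.e., |(P_T − □_T) ∩ ℤ^n| = |D(P_T) ∩ {0,1}^m|. -/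

import Mathlib

/-!
Write `T = {(j, g j)}` and call a row `i ∈ [m]` allowed in a column `j ∈ [n]` when the signed
vector of `T` in direction `j` lies in `S i`. Both sides of the claim are counts attached to this
bipartite relation.

* Flipping signs and adding the all-one vector, the lattice points of `P_T - □_T` become the
  vectors `y ≥ 1` of column degrees of partial assignments of rows to allowed columns
  (`ncard_lattice`). One direction uses the linear inequalities valid on `P_T` and Hall's theorem,
  the other writes the points of `x + □_T` explicitly as sums of points of the simplices.
* By Hall's theorem the draconian `0/1`-sequences are the indicators of the sets `M` of `n` rows
  that can be matched perfectly with the columns (`ncard_draconian`).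

The bijection `y ↔ M` (`ncard_degSet_eq`) comes from linear programming duality. Fix generic real
weights on the allowed pairs, weight `0` for staying unassigned (`none`), and consider column
prices `v` with `v none = 0`. A certificate (`Cert`) is a partial assignment `φ` optimal for `v`,
together with a tree of ties rooted at `none`: each column `j` owns a row `s j` assigned to it and
tied with another column, nearer to the root; `M` is the set of the rows `s j`.

Existence: given `y`, take a least-weight `φ` with column degrees `y`; it has no negative cycles,
so shortest walks to `none` yield the prices and the tree (`exists_tieTree`). Given `M`, do the same
for a least-weight perfect matching of `M`, then put every other row in its cheapest column.

Uniqueness: optimality makes `φ` a least-weight assignment, which is unique by genericity; prices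
supported by a tree are the least optimal prices, hence determined by `φ`; and since they are
combinations of weights of rows of `M`, rows outside `M` have no ties (`Cert.strict`). So `y`
determines `M` (`Cert.set_unique`) and `M` determines `φ`, hence `y` (`Cert.assign_unique`).
-/

open Pointwise

noncomputable section

/-- The signed standard basis vector of `ℝ^n`: `(i, true) ↦ e i`, `(i, false) ↦ -e i`. -/
def sgnVec (n : ℕ) (p : Fin n × Bool) : Fin n → ℝ :=
  if p.2 then Pi.single p.1 1 else -Pi.single p.1 1

/-- A set of signed vectors is admissible if it is nonempty and contains at most one of
`e i`, `-e i` for each `i`. -/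
def Adm (n : ℕ) (S : Finset (Fin n × Bool)) : Prop :=
  S.Nonempty ∧ ∀ i : Fin n, ¬((i, true) ∈ S ∧ (i, false) ∈ S)

/-- `AdS_n`: admissible sets of size `n` (exactly one of `±e i` for each `i`). -/
def AdSn (n : ℕ) (T : Finset (Fin n × Bool)) : Prop :=
  T.card = n ∧ Adm n T

/-- The simplex `Δ⁰_S := conv({0} ∪ S)`. -/
def simp0 (n : ℕ) (S : Finset (Fin n × Bool)) : Set (Fin n → ℝ) :=
  convexHull ℝ ({0} ∪ sgnVec n '' ↑S)

/-- The lattice points `ℤ^n ⊆ ℝ^n`. -/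
def latt (n : ℕ) : Set (Fin n → ℝ) := {x | ∀ j, ∃ z : ℤ, x j = (z : ℝ)}

/-- Minkowski difference `A − B := {x : x + B ⊆ A}`. -/
def mdiff {n : ℕ} (A B : Set (Fin n → ℝ)) : Set (Fin n → ℝ) :=
  {x | ∀ b ∈ B, x + b ∈ A}

/-- `□_T := Σ_{v ∈ T} conv{0, v}`, the unit cube of the octant of `T`. -/
def cubeT (n : ℕ) (T : Finset (Fin n × Bool)) : Set (Fin n → ℝ) :=
  ∑ p ∈ T, convexHull ℝ {0, sgnVec n p}

/-- `D(P_T)`: the set of G-draconian sequences of `P_T`, i.e. sequences `(a_1,…,a_m)` of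
nonnegative integers with `Σ a_i = n` and `Σ_{i∈I} a_i ≤ |⋃_{i∈I} S_i ∩ T|` for every
nonempty `I ⊆ [m]`. -/
def draconian (n m : ℕ) (S : Fin m → Finset (Fin n × Bool)) (T : Finset (Fin n × Bool)) :
    Set (Fin m → ℕ) :=
  {a | (∑ i, a i) = n ∧ ∀ I : Finset (Fin m), I.Nonempty →
      (∑ i ∈ I, a i) ≤ (I.biUnion fun i => S i ∩ T).card}

/-! ### Walks and least-weight partial assignments -/

section Core

variable {ι κ : Type*} [Fintype ι] [DecidableEq ι] [Fintype κ] [DecidableEq κ]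

/-- Number of rows that the partial assignment `φ` sends to the column `j`. -/
def colDeg (φ : ι → Option κ) (j : κ) : ℕ := (Finset.univ.filter fun i => φ i = some j).card

/-- First column visited by the walk through the rows `L`, a walk that ends in the column `e`. -/
def walkHead (φ : ι → Option κ) (e : Option κ) : List ι → Option κ
  | [] => e
  | i :: _ => φ i

/-- The change of total weight when every row of `L` is moved to the column of the next row
(the last one to `e`). -/
def walkCost (w : ι → Option κ → ℝ) (φ : ι → Option κ) (e : Option κ) : List ι → ℝ
  | [] => 0
  | i :: L => w i (walkHead φ e L) - w i (φ i) + walkCost w φ e L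

/-- Every row of `L` may be moved to the column of the next row (the last one to `e`). -/
def walkOk (ok : ι → Option κ → Prop) (φ : ι → Option κ) (e : Option κ) : List ι → Prop
  | [] => True
  | i :: L => ok i (walkHead φ e L) ∧ walkOk ok φ e L

/-- The assignment obtained from `φ` by moving every row of `L` to the column of the next row
(the last one to `e`). -/
def walkShift (φ : ι → Option κ) (e : Option κ) : List ι → ι → Option κ
  | [] => φ
  | i :: L => Function.update (walkShift φ e L) i (walkHead φ e L)

omit [Fintype ι] [Fintype κ] [DecidableEq κ] in
lemma walkShift_of_notMem (φ : ι → Option κ) (e : Option κ) (L : List ι) (i : ι) (hi : i ∉ L) :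
    walkShift φ e L i = φ i := by
  induction L with
  | nil => rfl
  | cons a L ih =>
    simp only [List.mem_cons, not_or] at hi
    simp [walkShift, Function.update_of_ne hi.1, ih hi.2]

omit [Fintype κ] [DecidableEq κ] in
lemma sum_update_row (G : ι → Option κ → ℝ) (f : ι → Option κ) (i : ι) (x : Option κ) :
    ∑ a, G a (Function.update f i x a) = ∑ a, G a (f a) - G i (f i) + G i x := by
  rw [← Finset.add_sum_erase _ _ (Finset.mem_univ i),
    ← Finset.add_sum_erase (Finset.univ) (fun a => G a (f a)) (Finset.mem_univ i)]
  have : ∑ a ∈ Finset.univ.erase i, G a (Function.update f i x a)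
      = ∑ a ∈ Finset.univ.erase i, G a (f a) := by
    refine Finset.sum_congr rfl fun a ha => ?_
    rw [Function.update_of_ne (Finset.ne_of_mem_erase ha)]
  rw [this]; simp; ring

omit [Fintype κ] [DecidableEq κ] in
lemma sum_walkShift_weight (w : ι → Option κ → ℝ) (φ : ι → Option κ) (e : Option κ) (L : List ι)
    (hL : L.Nodup) :
    ∑ a, w a (walkShift φ e L a) = ∑ a, w a (φ a) + walkCost w φ e L := by
  induction L with
  | nil => simp [walkShift, walkCost]
  | cons i L ih =>
    rw [List.nodup_cons] at hL
    simp only [walkShift, walkCost]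
    rw [sum_update_row, ih hL.2, walkShift_of_notMem _ _ _ _ hL.1]
    ring

omit [Fintype κ] [DecidableEq κ] in
/-- Shifting along a walk changes the column statistics only at the two ends of the walk. -/
lemma sum_walkShift_col (F : Option κ → ℝ) (φ : ι → Option κ) (e : Option κ) (L : List ι)
    (hL : L.Nodup) :
    ∑ a, F (walkShift φ e L a) = ∑ a, F (φ a) + F e - F (walkHead φ e L) := by
  induction L with
  | nil => simp [walkShift, walkHead]
  | cons i L ih =>
    rw [List.nodup_cons] at hL
    simp only [walkShift]
    rw [show walkHead φ e (i :: L) = φ i from rfl, sum_update_row (fun _ => F), ih hL.2, walkShift_of_notMem _ _ _ _ hL.1]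
    ring

omit [Fintype κ] [DecidableEq ι] in
lemma colDeg_eq_sum (φ : ι → Option κ) (j : κ) :
    (colDeg φ j : ℝ) = ∑ a, (if φ a = some j then (1 : ℝ) else 0) := by
  simp [colDeg]

omit [Fintype κ] [DecidableEq κ] [Fintype ι] in
lemma walkShift_ok {ok : ι → Option κ → Prop} {φ : ι → Option κ} (hφ : ∀ i, ok i (φ i))
    (e : Option κ) (L : List ι) (hL : walkOk ok φ e L) (i : ι) : ok i (walkShift φ e L i) := by
  induction L with
  | nil => exact hφ i
  | cons a L ih =>
    simp only [walkShift]
    by_cases h : i = a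
    · subst h; simpa using hL.1
    · rw [Function.update_of_ne h]; exact ih hL.2

omit [Fintype κ] [DecidableEq κ] [Fintype ι] [DecidableEq ι] in
lemma walkHead_append (φ : ι → Option κ) (e : Option κ) (A : List ι) (i : ι) (B : List ι) :
    walkHead φ e (A ++ i :: B) = walkHead φ (φ i) A := by
  cases A <;> rfl

omit [Fintype κ] [DecidableEq κ] [Fintype ι] [DecidableEq ι] in
lemma walkCost_append (w : ι → Option κ → ℝ) (φ : ι → Option κ) (e : Option κ) (A : List ι)
    (i : ι) (B : List ι) :
    walkCost w φ e (A ++ i :: B) = walkCost w φ (φ i) A + walkCost w φ e (i :: B) := by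
  induction A with
  | nil => simp [walkCost]
  | cons a A ih =>
    simp only [List.cons_append, walkCost, walkHead_append]
    rw [ih]; simp only [walkCost]; ring

omit [Fintype κ] [DecidableEq κ] [Fintype ι] [DecidableEq ι] in
lemma walkOk_append (ok : ι → Option κ → Prop) (φ : ι → Option κ) (e : Option κ) (A : List ι)
    (i : ι) (B : List ι) (h : walkOk ok φ e (A ++ i :: B)) :
    walkOk ok φ (φ i) A ∧ walkOk ok φ e (i :: B) := by
  induction A with
  | nil => exact ⟨trivial, h⟩
  | cons a A ih =>
    simp only [List.cons_append, walkOk, walkHead_append] at h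
    obtain ⟨h1, h2⟩ := ih h.2
    exact ⟨⟨h.1, h1⟩, h2⟩

/-- `φ` has least weight among the admissible assignments with its column degrees. -/
def MinAssign (ok : ι → Option κ → Prop) (w : ι → Option κ → ℝ) (φ : ι → Option κ) : Prop :=
  (∀ i, ok i (φ i)) ∧ ∀ ψ : ι → Option κ, (∀ i, ok i (ψ i)) → (∀ j, colDeg ψ j = colDeg φ j) →
    ∑ i, w i (φ i) ≤ ∑ i, w i (ψ i)

omit [Fintype κ] in
/-- A least-weight assignment has no closed walk of negative cost: shifting along the walk would
give a cheaper assignment with the same column degrees. -/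
lemma cycle_nonneg {ok : ι → Option κ → Prop} {w : ι → Option κ → ℝ} {φ : ι → Option κ}
    (hφ : MinAssign ok w φ) (e : Option κ) (L : List ι) (hL : L.Nodup) (hok : walkOk ok φ e L)
    (he : walkHead φ e L = e) : 0 ≤ walkCost w φ e L := by
  have h := hφ.2 (walkShift φ e L) (walkShift_ok hφ.1 e L hok) (fun j => by
    have := sum_walkShift_col (fun x => if x = some j then (1 : ℝ) else 0) φ e L hL
    rw [← colDeg_eq_sum, ← colDeg_eq_sum, he] at this
    have h2 : (colDeg (walkShift φ e L) j : ℝ) = colDeg φ j := by linarith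
    exact_mod_cast h2)
  rw [sum_walkShift_weight _ _ _ _ hL] at h
  linarith

/-- Optimality of the prices `v` (normalised by `v none = 0`) for the assignment `φ`: every row
sits in a column minimising its reduced cost. -/
def Opt (ok : ι → Option κ → Prop) (w : ι → Option κ → ℝ) (φ : ι → Option κ)
    (v : Option κ → ℝ) : Prop :=
  v none = 0 ∧ ∀ i k, ok i k → w i (φ i) - v (φ i) ≤ w i k - v k

/-- `s`, `t` describe a tree of ties rooted at `none`: the row `s j` sits in the column `j` and
is tied with the column `t j`, which is closer to the root as measured by `h`. -/
def TieTree (ok : ι → Option κ → Prop) (w : ι → Option κ → ℝ) (φ : ι → Option κ)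
    (v : Option κ → ℝ) (s : κ → ι) (t : κ → Option κ) (h : Option κ → ℕ) : Prop :=
  ∀ j, φ (s j) = some j ∧ ok (s j) (t j) ∧
    w (s j) (some j) - v (some j) = w (s j) (t j) - v (t j) ∧ h (t j) < h (some j)

omit [Fintype κ] in
/-- Shortest walks to `none` provide optimal prices and a tree of ties. -/
lemma exists_tieTree {ok : ι → Option κ → Prop} (hok : ∀ i, ok i none)
    {w : ι → Option κ → ℝ} {φ : ι → Option κ}
    (hφ : MinAssign ok w φ) (hpos : ∀ j, 1 ≤ colDeg φ j) :
    ∃ v s t h, Opt ok w φ v ∧ TieTree ok w φ v s t h := by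
  -- simple walks from the column `x` to `none`
  let P : Option κ → Set (List ι) := fun x =>
    {L | walkHead φ none L = x ∧ walkOk ok φ none L ∧ (none :: L.map φ).Nodup}
  have hnd : ∀ x, ∀ L ∈ P x, L.Nodup := fun x L hL =>
    List.Nodup.of_map φ (List.nodup_cons.1 hL.2.2).2
  have hfin : ∀ x, (P x).Finite := fun x =>
    (Set.finite_range (fun L : {L : List ι // L.Nodup} => L.1)).subset
      fun L hL => ⟨⟨L, hnd x L hL⟩, rfl⟩
  have hne : ∀ x, (P x).Nonempty := by
    intro x
    cases x with
    | none => exact ⟨[], rfl, trivial, by simp⟩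
    | some j =>
      obtain ⟨i, hi⟩ := Finset.card_pos.1 (hpos j)
      have hi' : φ i = some j := by simpa using hi
      exact ⟨[i], hi', ⟨hok i, trivial⟩, by simp [hi']⟩
  -- ties in cost are broken by length
  have hmin := fun x => Set.exists_min_image (P x)
    (fun L => toLex (walkCost w φ none L, L.length)) (hfin x) (hne x)
  choose L hLP hLmin using hmin
  have hcost : ∀ x, ∀ L' ∈ P x, walkCost w φ none (L x) ≤ walkCost w φ none L' := by
    intro x L' hL'
    rcases Prod.Lex.toLex_le_toLex.1 (hLmin x L' hL') with h | h
    · exact h.le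
    · exact h.1.le
  have hnone : ∀ L' ∈ P none, L' = [] := by
    rintro (_ | ⟨i, L'⟩) ⟨h1, h2, h3⟩
    · rfl
    · simp only [walkHead] at h1
      simp [h1] at h3
  have hstep : ∀ i k, ok i k →
      walkCost w φ none (L (φ i)) ≤ w i k - w i (φ i) + walkCost w φ none (L k) := by
    intro i k hik
    obtain ⟨hk, hkok, hknd⟩ := hLP k
    by_cases hm : φ i ∈ (L k).map φ
    · obtain ⟨i', hi', hii'⟩ := List.mem_map.1 hm
      obtain ⟨A, B, hAB⟩ := List.append_of_mem hi'
      rw [hAB] at hk hkok hknd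
      obtain ⟨hokA, hokB⟩ := walkOk_append _ _ _ _ _ _ hkok
      rw [walkHead_append] at hk
      have hsim : (none :: (i' :: B).map φ).Nodup := by
        refine hknd.sublist ?_
        rw [List.map_append]
        exact (List.sublist_append_right _ _).cons_cons _
      have hB : walkCost w φ none (L (φ i)) ≤ walkCost w φ none (i' :: B) :=
        hcost _ _ ⟨hii', hokB, hsim⟩
      have hiA : i ∉ A := by
        intro hiA
        have h1 := (List.nodup_cons.1 hknd).2
        rw [List.map_append, List.nodup_append] at h1
        exact h1.2.2 (φ i) (List.mem_map_of_mem hiA) (φ i') (by simp) hii'.symm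
      have hA : A.Nodup := by
        have h1 := (List.nodup_cons.1 hknd).2
        rw [List.map_append, List.nodup_append] at h1
        exact List.Nodup.of_map φ h1.1
      have hC := cycle_nonneg hφ (φ i') (i :: A) (List.nodup_cons.2 ⟨hiA, hA⟩)
        ⟨by rw [hk]; exact hik, hokA⟩ (by simp [walkHead, hii'])
      have hsplit := walkCost_append w φ none A i' B
      rw [hAB, hsplit]
      simp only [walkCost] at hC hB ⊢
      rw [hk] at hC
      linarith
    · by_cases hn : φ i = none
      · have hiL : i ∉ L k := fun h => hm (List.mem_map_of_mem h)
        have hC := cycle_nonneg hφ none (i :: L k)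
          (List.nodup_cons.2 ⟨hiL, hnd _ _ (hLP k)⟩) ⟨by rw [hk]; exact hik, hkok⟩
          (by simp [walkHead, hn])
        have h0 : L (φ i) = [] := by
          rw [hn]; exact hnone _ (hLP none)
        rw [h0]
        simp only [walkCost] at hC ⊢
        rw [hk] at hC
        exact hC
      · have := hcost (φ i) (i :: L k) ⟨rfl, ⟨by rw [hk]; exact hik, hkok⟩, by
          simp only [List.map_cons, List.nodup_cons, List.mem_cons, not_or] at hknd ⊢
          exact ⟨⟨fun h => hn h.symm, hknd.1⟩, hm, hknd.2⟩⟩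
        simp only [walkCost] at this
        rw [hk] at this
        exact this
  have hfirst : ∀ j : κ, ∃ i L', L (some j) = i :: L' ∧ φ i = some j := by
    intro j
    have h := (hLP (some j)).1
    cases hL : L (some j) with
    | nil => rw [hL] at h; simp [walkHead] at h
    | cons i L' => rw [hL] at h; exact ⟨i, L', rfl, h⟩
  choose s L' hs hsφ using hfirst
  refine ⟨fun x => -walkCost w φ none (L x), s, fun j => walkHead φ none (L' j),
    fun x => (L x).length, ⟨?_, ?_⟩, ?_⟩
  · simp [hnone _ (hLP none), walkCost]
  · intro i k hik
    have := hstep i k hik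
    simp only
    linarith
  · intro j
    obtain ⟨h1, h2, h3⟩ := hLP (some j)
    rw [hs j] at h1 h2 h3
    have hL' : L' j ∈ P (walkHead φ none (L' j)) := by
      refine ⟨rfl, h2.2, h3.sublist ?_⟩
      exact (List.sublist_cons_self _ _).cons_cons _
    have hle := hcost _ _ hL'
    have hst := hstep (s j) _ h2.1
    have heq : walkCost w φ none (L (some j)) =
        w (s j) (walkHead φ none (L' j)) - w (s j) (φ (s j)) + walkCost w φ none (L' j) := by
      rw [hs j]; rfl
    rw [hsφ j] at hst heq
    refine ⟨hsφ j, h2.1, by simp only; linarith, ?_⟩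
    have hlex := Prod.Lex.toLex_le_toLex.1 (hLmin _ _ hL')
    rcases hlex with h | h
    · simp only at h; linarith
    · have := h.2
      simp only at this ⊢
      rw [hs j, List.length_cons]
      omega

/-! ### Generic weights and certificates -/

/-- Genericity of the weights: additive functionals on `ℝ` take arbitrary rational values on the
weights of the allowed pairs, and `none` has weight zero. -/
def Generic (w : ι → Option κ → ℝ) : Prop :=
  (∀ i, w i none = 0) ∧
    ∀ g : ι → κ → ℚ, ∃ f : ℝ →+ ℚ, ∀ i j, f (w i (some j)) = g i j

omit [Fintype ι] [DecidableEq ι] [Fintype κ] [DecidableEq κ] in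
/-- Distinct elements of a `ℚ`-basis of `ℝ` are generic weights. -/
lemma exists_generic (ι κ : Type) [Finite ι] [Finite κ] :
    ∃ w : ι → Option κ → ℝ, Generic w := by
  have hfr : ¬ Module.Finite ℚ ℝ := by
    intro h
    have h1 := Module.rank_lt_aleph0 ℚ ℝ
    rw [Real.rank_rat_real] at h1
    exact absurd h1 (not_lt.2 Cardinal.aleph0_le_continuum)
  let b := Module.Basis.ofVectorSpace ℚ ℝ
  have hinf : Infinite (Module.Basis.ofVectorSpaceIndex ℚ ℝ) := by
    by_contra hc
    rw [not_infinite_iff_finite] at hc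
    exact hfr (Module.Finite.of_basis b)
  let e : (ι × κ) ↪ Module.Basis.ofVectorSpaceIndex ℚ ℝ :=
    ((Finite.equivFin (ι × κ)).toEmbedding.trans Fin.valEmbedding).trans (Infinite.natEmbedding _)
  refine ⟨fun i k => k.elim 0 fun j => b (e (i, j)), fun i => rfl, fun g => ?_⟩
  refine ⟨(b.constr ℚ (Function.extend e (fun p => g p.1 p.2) 0)).toAddMonoidHom, fun i j => ?_⟩
  change b.constr ℚ (Function.extend e (fun p => g p.1 p.2) 0) (b (e (i, j))) = g i j
  rw [Module.Basis.constr_basis, e.injective.extend_apply]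

omit [Fintype ι] [Fintype κ] in
/-- The weights of one row in two different columns are separated by an additive functional that
kills all other rows. -/
lemma Generic.exists_detect {w : ι → Option κ → ℝ} (hw : Generic w) (i : ι) {k l : Option κ}
    (hkl : k ≠ l) :
    ∃ f : ℝ →+ ℚ, f (w i k) ≠ f (w i l) ∧ ∀ i' ≠ i, ∀ x, f (w i' x) = 0 := by
  have key : ∀ a : κ, ∃ f : ℝ →+ ℚ, (∀ x, f (w i x) = if x = some a then 1 else 0) ∧
      ∀ i' ≠ i, ∀ x, f (w i' x) = 0 := by
    intro a
    obtain ⟨f, hf⟩ := hw.2 fun i' j => if i' = i ∧ j = a then 1 else 0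
    refine ⟨f, ?_, ?_⟩
    · rintro (_ | j)
      · simp [hw.1]
      · simp [hf]
    · rintro i' hi' (_ | j)
      · simp [hw.1]
      · simp [hf, hi']
  cases k with
  | some a =>
    obtain ⟨f, h1, h2⟩ := key a
    refine ⟨f, ?_, h2⟩
    rw [h1, h1, if_pos rfl, if_neg hkl.symm]; exact one_ne_zero
  | none =>
    cases l with
    | none => exact absurd rfl hkl
    | some a =>
      obtain ⟨f, h1, h2⟩ := key a
      refine ⟨f, ?_, h2⟩
      rw [h1, h1, if_neg hkl, if_pos rfl]; exact zero_ne_one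

omit [Fintype ι] [Fintype κ] in
/-- Distinct assignments have distinct total weights. -/
lemma Generic.eq_of_sum_eq {w : ι → Option κ → ℝ} (hw : Generic w) (A : Finset ι)
    (φ ψ : ι → Option κ) (h : ∑ i ∈ A, w i (φ i) = ∑ i ∈ A, w i (ψ i)) :
    ∀ i ∈ A, φ i = ψ i := by
  intro i hi
  by_contra hne
  obtain ⟨f, h1, h2⟩ := hw.exists_detect i hne
  have h3 := congrArg f h
  rw [map_sum, map_sum, Finset.sum_eq_single_of_mem i hi fun b _ hb => h2 b hb _,
    Finset.sum_eq_single_of_mem i hi fun b _ hb => h2 b hb _] at h3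
  exact h1 h3

/-- A certificate: the admissible partial assignment `φ` is optimal for the prices `v`, and `M` is the set
of rows of a tree of ties rooted at `none`. -/
def Cert (ok : ι → Option κ → Prop) (w : ι → Option κ → ℝ) (φ : ι → Option κ)
    (M : Finset ι) (v : Option κ → ℝ) : Prop :=
  (∀ i, ok i (φ i)) ∧ Opt ok w φ v ∧
    ∃ s t h, TieTree ok w φ v s t h ∧ ∀ i, i ∈ M ↔ ∃ j, s j = i

section
omit [Fintype ι] [DecidableEq ι] [Fintype κ] [DecidableEq κ]

/-- Induction along a tree of ties. -/
lemma TieTree.induct {ok : ι → Option κ → Prop} {w : ι → Option κ → ℝ} {φ : ι → Option κ}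
    {v : Option κ → ℝ} {s : κ → ι} {t : κ → Option κ} {h : Option κ → ℕ}
    (hT : TieTree ok w φ v s t h) {p : Option κ → Prop} (h0 : p none)
    (h1 : ∀ j, p (t j) → p (some j)) (x : Option κ) : p x := by
  suffices H : ∀ n x, h x = n → p x from H _ x rfl
  intro n
  induction n using Nat.strong_induction_on with
  | _ n ih =>
    rintro (_ | j) hx
    · exact h0
    · exact h1 j (ih _ (hx ▸ (hT j).2.2.2) _ rfl)

/-- Prices supported by a tree of ties are the least optimal prices. -/
lemma TieTree.le_of_opt {ok : ι → Option κ → Prop} {w : ι → Option κ → ℝ} {φ φ' : ι → Option κ}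
    {v v' : Option κ → ℝ} {s : κ → ι} {t : κ → Option κ} {h : Option κ → ℕ}
    (hT : TieTree ok w φ v s t h) (hv : v none = 0) (hv' : Opt ok w φ' v')
    (hs : ∀ j, φ' (s j) = some j) (x : Option κ) : v x ≤ v' x := by
  refine hT.induct (p := fun x => v x ≤ v' x) (by rw [hv, hv'.1]) (fun j hj => ?_) x
  obtain ⟨-, h2, h3, -⟩ := hT j
  have := hv'.2 (s j) (t j) h2
  rw [hs j] at this
  linarith

/-- Equal assignments on the tree rows force equal prices, as both are least. -/
lemma Cert.prices_eq {ok : ι → Option κ → Prop} {w : ι → Option κ → ℝ} {φ φ' : ι → Option κ}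
    {M M' : Finset ι} {v v' : Option κ → ℝ} (hc : Cert ok w φ M v) (hc' : Cert ok w φ' M' v')
    (h : ∀ i ∈ M, φ i = φ' i) (h' : ∀ i ∈ M', φ i = φ' i) : v = v' := by
  obtain ⟨-, ho, s, t, d, hT, hM⟩ := hc
  obtain ⟨-, ho', s', t', d', hT', hM'⟩ := hc'
  funext x
  refine le_antisymm (hT.le_of_opt ho.1 ho' (fun j => ?_) x)
    (hT'.le_of_opt ho'.1 ho (fun j => ?_) x)
  · rw [← h (s j) ((hM _).2 ⟨j, rfl⟩)]; exact (hT j).1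
  · rw [h' (s' j) ((hM' _).2 ⟨j, rfl⟩)]; exact (hT' j).1

lemma Cert.sum_M [DecidableEq ι] [Fintype κ] {ok : ι → Option κ → Prop} {w : ι → Option κ → ℝ}
    {φ : ι → Option κ} {M : Finset ι} {v : Option κ → ℝ} (hc : Cert ok w φ M v)
    (F : Option κ → ℝ) : ∑ i ∈ M, F (φ i) = ∑ j, F (some j) := by
  obtain ⟨-, -, s, t, d, hT, hM⟩ := hc
  have hs : Function.Injective s := fun a b hab => by
    have h1 := (hT a).1
    rw [hab, (hT b).1] at h1
    exact (Option.some.inj h1).symm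
  have : M = Finset.univ.image s := by
    ext i; simp [hM i]
  rw [this, Finset.sum_image fun a _ b _ hab => hs hab]
  exact Finset.sum_congr rfl fun j _ => by rw [(hT j).1]

end

omit [Fintype ι] [Fintype κ] in
/-- Rows outside `M` have a unique cheapest column: the prices are combinations of weights of
rows of `M`, so a tie elsewhere contradicts genericity. -/
lemma Cert.strict {ok : ι → Option κ → Prop} {w : ι → Option κ → ℝ} {φ : ι → Option κ}
    {M : Finset ι} {v : Option κ → ℝ} (hw : Generic w) (hc : Cert ok w φ M v)
    {i : ι} (hi : i ∉ M) {k l : Option κ} (hkl : w i k - v k = w i l - v l) : k = l := by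
  by_contra hne
  obtain ⟨-, ho, s, t, d, hT, hM⟩ := hc
  obtain ⟨f, h1, h2⟩ := hw.exists_detect i hne
  have hv : ∀ x, f (v x) = 0 := fun x =>
    hT.induct (p := fun x => f (v x) = 0) (by rw [ho.1, map_zero]) (fun j hj => by
      have hsj : s j ≠ i := fun h => hi ((hM i).2 ⟨j, h⟩)
      have h3 : v (some j) = w (s j) (some j) - w (s j) (t j) + v (t j) := by
        have := (hT j).2.2.1
        linarith
      rw [h3, map_add, map_sub, h2 _ hsj, h2 _ hsj, hj]; norm_num) x
  have h3 := congrArg f hkl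
  rw [map_sub, map_sub, hv, hv, sub_zero, sub_zero] at h3
  exact h1 h3

omit [DecidableEq ι] in
lemma sum_col (φ : ι → Option κ) (v : Option κ → ℝ) (hv : v none = 0) :
    ∑ i, v (φ i) = ∑ j, (colDeg φ j : ℝ) * v (some j) := by
  simp only [colDeg_eq_sum, Finset.sum_mul]
  rw [Finset.sum_comm]
  refine Finset.sum_congr rfl fun i _ => ?_
  cases hi : φ i with
  | none => simp [hv]
  | some a => simp

omit [Fintype ι] [Fintype κ] [DecidableEq ι] [DecidableEq κ] in
lemma Opt.sum_le {ok : ι → Option κ → Prop} {w : ι → Option κ → ℝ} {φ φ' : ι → Option κ}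
    {v : Option κ → ℝ} (ho : Opt ok w φ v) (hφ' : ∀ i, ok i (φ' i)) (A : Finset ι)
    (h : ∑ i ∈ A, v (φ i) = ∑ i ∈ A, v (φ' i)) : ∑ i ∈ A, w i (φ i) ≤ ∑ i ∈ A, w i (φ' i) := by
  have := Finset.sum_le_sum fun i (_ : i ∈ A) => ho.2 i (φ' i) (hφ' i)
  rw [Finset.sum_sub_distrib, Finset.sum_sub_distrib, h] at this
  linarith

omit [Fintype ι] in
/-- The set `M` determines the certificate. -/
lemma Cert.assign_unique {ok : ι → Option κ → Prop} {w : ι → Option κ → ℝ} (hw : Generic w)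
    {φ φ' : ι → Option κ} {M : Finset ι} {v v' : Option κ → ℝ}
    (hc : Cert ok w φ M v) (hc' : Cert ok w φ' M v') : φ = φ' := by
  have hM : ∀ i ∈ M, φ i = φ' i := by
    refine hw.eq_of_sum_eq M φ φ' (le_antisymm ?_ ?_)
    · exact hc.2.1.sum_le hc'.1 M (by rw [hc.sum_M, hc'.sum_M])
    · exact hc'.2.1.sum_le hc.1 M (by rw [hc.sum_M, hc'.sum_M])
  have hv := hc.prices_eq hc' hM hM
  subst hv
  funext i
  by_cases hi : i ∈ M
  · exact hM i hi
  · exact hc.strict hw hi (le_antisymm (hc.2.1.2 i _ (hc'.1 i)) (hc'.2.1.2 i _ (hc.1 i)))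

/-- The column degrees determine the set `M`. -/
lemma Cert.set_unique {ok : ι → Option κ → Prop} {w : ι → Option κ → ℝ} (hw : Generic w)
    {φ φ' : ι → Option κ} {M M' : Finset ι} {v v' : Option κ → ℝ}
    (hc : Cert ok w φ M v) (hc' : Cert ok w φ' M' v') (hdeg : colDeg φ = colDeg φ') :
    M = M' := by
  have hφ : ∀ i ∈ Finset.univ, φ i = φ' i := by
    refine hw.eq_of_sum_eq Finset.univ φ φ' (le_antisymm ?_ ?_)
    · exact hc.2.1.sum_le hc'.1 _ (by rw [sum_col _ _ hc.2.1.1, sum_col _ _ hc.2.1.1, hdeg])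
    · exact hc'.2.1.sum_le hc.1 _ (by rw [sum_col _ _ hc'.2.1.1, sum_col _ _ hc'.2.1.1, hdeg])
  have hv := hc.prices_eq hc' (fun i _ => hφ i (Finset.mem_univ i))
    (fun i _ => hφ i (Finset.mem_univ i))
  have hφ' : φ = φ' := funext fun i => hφ i (Finset.mem_univ i)
  subst hφ' hv
  -- `M` consists of the rows that have a tie
  have key : ∀ {N N' : Finset ι}, Cert ok w φ N v → Cert ok w φ N' v → N ⊆ N' := by
    intro N N' hN hN' i hi
    by_contra hi'
    obtain ⟨-, -, s, t, d, hT, hM⟩ := hN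
    obtain ⟨j, rfl⟩ := (hM i).1 hi
    obtain ⟨-, -, h3, h4⟩ := hT j
    have := hN'.strict hw hi' h3
    rw [← this] at h4
    exact lt_irrefl _ h4
  exact (key hc hc').antisymm (key hc' hc)

/-! ### Degree vectors and matchable sets -/

/-- Column degrees of admissible partial assignments that use every column. -/
def degSet (ok : ι → Option κ → Prop) : Set (κ → ℕ) :=
  {y | (∀ j, 1 ≤ y j) ∧ ∃ φ : ι → Option κ, (∀ i, ok i (φ i)) ∧ colDeg φ = y}

/-- Sets of rows that can be matched perfectly with the columns. -/
def matchSet (ok : ι → Option κ → Prop) : Set (Finset ι) :=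
  {M | ∃ φ : ι → Option κ, (∀ i, ok i (φ i)) ∧ (∀ j, colDeg φ j = 1) ∧ ∀ i, i ∈ M ↔ φ i ≠ none}

omit [Fintype κ] [DecidableEq ι] in
lemma exists_minAssign [Finite κ] {ok : ι → Option κ → Prop} (w : ι → Option κ → ℝ)
    {φ₀ : ι → Option κ} (hφ₀ : ∀ i, ok i (φ₀ i)) :
    ∃ φ, MinAssign ok w φ ∧ colDeg φ = colDeg φ₀ := by
  obtain ⟨φ, ⟨h1, h2⟩, h3⟩ := Set.exists_min_image
    {φ : ι → Option κ | (∀ i, ok i (φ i)) ∧ colDeg φ = colDeg φ₀}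
    (fun φ => ∑ i, w i (φ i)) (Set.toFinite _) ⟨φ₀, hφ₀, rfl⟩
  exact ⟨φ, ⟨h1, fun ψ hψ hd => h3 ψ ⟨hψ, by rw [← h2]; exact funext hd⟩⟩, h2⟩

/-- Every degree vector using all columns has a certificate. -/
lemma exists_cert_of_degSet {ok : ι → Option κ → Prop} (hok : ∀ i, ok i none)
    (w : ι → Option κ → ℝ) {y : κ → ℕ} (hy : y ∈ degSet ok) :
    ∃ M φ v, Cert ok w φ M v ∧ colDeg φ = y := by
  obtain ⟨hpos, φ₀, h1, h2⟩ := hy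
  obtain ⟨φ, hmin, hdeg⟩ := exists_minAssign w h1
  obtain ⟨v, s, t, h, ho, hT⟩ := exists_tieTree hok hmin (by rw [hdeg, h2]; exact hpos)
  exact ⟨Finset.univ.image s, φ, v, ⟨hmin.1, ho, s, t, h, hT, fun i => by simp⟩,
    by rw [hdeg, h2]⟩

omit [DecidableEq ι] in
lemma card_of_colDeg_one {φ : ι → Option κ} (hφ : ∀ j, colDeg φ j = 1) {M : Finset ι}
    (hM : ∀ i, i ∈ M ↔ φ i ≠ none) : M.card = Fintype.card κ := by
  have h := sum_col φ (fun x => if x = none then (0 : ℝ) else 1) (by simp)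
  have h2 : (M.card : ℝ) = ∑ i, if φ i = none then (0 : ℝ) else 1 := by
    have : M = Finset.univ.filter fun i => φ i ≠ none := by ext i; simp [hM]
    rw [this, Finset.card_filter]
    push_cast
    exact Finset.sum_congr rfl fun i _ => by by_cases hi : φ i = none <;> simp [hi]
  rw [← h2] at h
  simp [hφ] at h
  exact_mod_cast h

/-- Every matchable set of rows has a certificate. -/
lemma exists_cert_of_matchSet {ok : ι → Option κ → Prop} (hok : ∀ i, ok i none)
    (w : ι → Option κ → ℝ) {M : Finset ι} (hM : M ∈ matchSet ok) :
    ∃ φ v, Cert ok w φ M v := by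
  obtain ⟨φ₀, h1, h2, h3⟩ := hM
  -- rows outside `M` are first forced to stay unassigned
  let ok' : ι → Option κ → Prop := fun i k => ok i k ∧ (i ∉ M → k = none)
  have h1' : ∀ i, ok' i (φ₀ i) := fun i => ⟨h1 i, fun hi => by
    by_contra hc; exact hi ((h3 i).2 hc)⟩
  obtain ⟨φ, hmin, hdeg⟩ := exists_minAssign w h1'
  obtain ⟨v, s, t, h, ho, hT⟩ := exists_tieTree (fun i => ⟨hok i, fun _ => rfl⟩) hmin
    (fun j => by rw [hdeg, h2])
  have hsM : ∀ j, s j ∈ M := fun j => by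
    by_contra hc
    have := (hmin.1 (s j)).2 hc
    rw [(hT j).1] at this
    cases this
  have hs : Function.Injective s := fun a b hab => by
    have h1 := (hT a).1
    rw [hab, (hT b).1] at h1
    exact (Option.some.inj h1).symm
  have himg : Finset.univ.image s = M := by
    refine Finset.eq_of_subset_of_card_le (fun i hi => ?_) ?_
    · obtain ⟨j, -, rfl⟩ := Finset.mem_image.1 hi
      exact hsM j
    · rw [Finset.card_image_of_injective _ hs, Finset.card_univ, card_of_colDeg_one h2 h3]
  have hbest : ∀ i, ∃ k, ok i k ∧ ∀ l, ok i l → w i k - v k ≤ w i l - v l := fun i => by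
    obtain ⟨k, hk, hk'⟩ := Set.exists_min_image {k | ok i k} (fun k => w i k - v k)
      (Set.toFinite _) ⟨none, hok i⟩
    exact ⟨k, hk, hk'⟩
  choose best hb1 hb2 using hbest
  refine ⟨fun i => if i ∈ M then φ i else best i, v, ?_, ⟨ho.1, ?_⟩, s, t, h, ?_, ?_⟩
  · intro i
    by_cases hi : i ∈ M
    · simpa [hi] using (hmin.1 i).1
    · simpa [hi] using hb1 i
  · intro i k hk
    by_cases hi : i ∈ M
    · simpa [hi] using ho.2 i k ⟨hk, fun h => absurd hi h⟩
    · simpa [hi] using hb2 i k hk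
  · intro j
    obtain ⟨a, b, c, d⟩ := hT j
    exact ⟨by simpa [hsM j] using a, b.1, c, d⟩
  · intro i
    rw [← himg]; simp

omit [DecidableEq ι] [Fintype κ] in
lemma Cert.mem_degSet {ok : ι → Option κ → Prop} {w : ι → Option κ → ℝ} {φ : ι → Option κ}
    {M : Finset ι} {v : Option κ → ℝ} (hc : Cert ok w φ M v) : colDeg φ ∈ degSet ok := by
  obtain ⟨h1, ho, s, t, d, hT, hM⟩ := hc
  exact ⟨fun j => Finset.card_pos.2 ⟨s j, by simpa using (hT j).1⟩, φ, h1, rfl⟩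

omit [Fintype κ] in
lemma Cert.mem_matchSet {ok : ι → Option κ → Prop} (hok : ∀ i, ok i none)
    {w : ι → Option κ → ℝ} {φ : ι → Option κ}
    {M : Finset ι} {v : Option κ → ℝ} (hc : Cert ok w φ M v) : M ∈ matchSet ok := by
  obtain ⟨h1, ho, s, t, d, hT, hM⟩ := hc
  refine ⟨fun i => if i ∈ M then φ i else none, fun i => ?_, fun j => ?_, fun i => ?_⟩
  · by_cases hi : i ∈ M
    · simpa [hi] using h1 i
    · simpa [hi] using hok i
  · refine Finset.card_eq_one.2 ⟨s j, ?_⟩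
    ext i
    simp only [Finset.mem_filter, Finset.mem_univ, true_and, Finset.mem_singleton]
    constructor
    · intro h
      by_cases hi : i ∈ M
      · obtain ⟨a, rfl⟩ := (hM i).1 hi
        rw [if_pos hi, (hT a).1] at h
        rw [Option.some.inj h]
      · simp [hi] at h
    · rintro rfl
      rw [if_pos ((hM _).2 ⟨j, rfl⟩), (hT j).1]
  · by_cases hi : i ∈ M
    · obtain ⟨a, rfl⟩ := (hM i).1 hi
      simp [hi, (hT a).1]
    · simp [hi]

end Core

/-- The combinatorial heart: degree vectors using every column are equinumerous with the
matchable sets of rows. -/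
lemma ncard_degSet_eq {ι κ : Type} [Fintype ι] [DecidableEq ι] [Fintype κ] [DecidableEq κ]
    {ok : ι → Option κ → Prop} (hok : ∀ i, ok i none) :
    (degSet ok).ncard = (matchSet ok).ncard := by
  obtain ⟨w, hw⟩ := exists_generic ι κ
  have hex := fun y (hy : y ∈ degSet ok) => exists_cert_of_degSet hok w hy
  choose M φ v hc hd using hex
  refine Set.ncard_congr M (fun y hy => (hc y hy).mem_matchSet hok) ?_ ?_
  · intro y y' hy hy' h
    have h1 := hc y hy
    rw [h] at h1
    rw [← hd y hy, ← hd y' hy', h1.assign_unique hw (hc y' hy')]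
  · intro N hN
    obtain ⟨ψ, u, hψ⟩ := exists_cert_of_matchSet hok w hN
    refine ⟨colDeg ψ, hψ.mem_degSet, ?_⟩
    exact (hc _ hψ.mem_degSet).set_unique hw hψ (hd _ _)

/-! ### Lattice points and draconian sequences -/

/-- The sign `±1` attached to a Boolean. -/
def sgn (b : Bool) : ℝ := if b then 1 else -1

lemma sgn_mul_sgn (b : Bool) : sgn b * sgn b = 1 := by cases b <;> simp [sgn]

lemma sgnVec_apply (n : ℕ) (j : Fin n) (b : Bool) (k : Fin n) :
    sgnVec n (j, b) k = if k = j then sgn b else 0 := by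
  cases b <;> by_cases h : k = j <;> simp [sgnVec, sgn, h]

/-- An element of `AdS_n` is the graph of a choice of signs. -/
lemma AdSn.exists_signs {n : ℕ} {T : Finset (Fin n × Bool)} (hT : AdSn n T) :
    ∃ g : Fin n → Bool, T = Finset.univ.image fun j => (j, g j) := by
  obtain ⟨hc, -, hA⟩ := hT
  have hinj : Set.InjOn Prod.fst (T : Set (Fin n × Bool)) := by
    rintro ⟨j, a⟩ ha ⟨k, b⟩ hb hab
    obtain rfl : j = k := hab
    cases a <;> cases b
    · rfl
    · exact absurd ⟨hb, ha⟩ (hA j)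
    · exact absurd ⟨ha, hb⟩ (hA j)
    · rfl
  have himg : T.image Prod.fst = Finset.univ := by
    apply Finset.eq_univ_of_card
    rw [Finset.card_image_of_injOn hinj, hc, Fintype.card_fin]
  have hex : ∀ j, ∃ b, (j, b) ∈ T := fun j => by
    obtain ⟨⟨k, b⟩, hp, rfl⟩ := Finset.mem_image.1 (himg ▸ Finset.mem_univ j : j ∈ T.image _)
    exact ⟨b, hp⟩
  choose g hg using hex
  refine ⟨g, Finset.Subset.antisymm ?_ ?_⟩
  · rintro ⟨j, b⟩ hp
    exact Finset.mem_image.2 ⟨j, Finset.mem_univ _, hinj (hg j) hp rfl⟩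
  · intro p hp
    obtain ⟨j, -, rfl⟩ := Finset.mem_image.1 hp
    exact hg j

section Geometry

variable {n m : ℕ} (S : Fin m → Finset (Fin n × Bool)) (g : Fin n → Bool)

/-- The set `T` of signed vectors with signs `g`. -/
def signT (g : Fin n → Bool) : Finset (Fin n × Bool) := Finset.univ.image fun j => (j, g j)

lemma mem_signT {g : Fin n → Bool} {p : Fin n × Bool} : p ∈ signT g ↔ p.2 = g p.1 := by
  rcases p with ⟨j, b⟩
  simp only [signT, Finset.mem_image, Finset.mem_univ, true_and, Prod.mk.injEq]
  constructor
  · rintro ⟨a, rfl, rfl⟩; rfl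
  · rintro h; exact ⟨j, rfl, h.symm⟩

/-- Row `i` may be assigned to column `j` when the signed vector of `T` in direction `j` lies
in `S i`; it may always stay unassigned. -/
def allowed (i : Fin m) (k : Option (Fin n)) : Prop := ∀ j, k = some j → (j, g j) ∈ S i

/-- The linear inequalities valid on the simplex `Δ⁰_{A ∩ T}`. -/
lemma simp0_bound {A : Finset (Fin n × Bool)} {x : Fin n → ℝ} (hx : x ∈ simp0 n (A ∩ signT g)) :
    (∀ j, 0 ≤ sgn (g j) * x j) ∧ ∀ K : Finset (Fin n),
      ∑ j ∈ K, sgn (g j) * x j ≤ if ∃ j ∈ K, (j, g j) ∈ A then 1 else 0 := by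
  let C : Set (Fin n → ℝ) := {x | (∀ j, 0 ≤ sgn (g j) * x j) ∧ ∀ K : Finset (Fin n),
      ∑ j ∈ K, sgn (g j) * x j ≤ if ∃ j ∈ K, (j, g j) ∈ A then 1 else 0}
  have hC : Convex ℝ C := by
    intro x hx y hy a b ha hb hab
    refine ⟨fun j => ?_, fun K => ?_⟩
    · have h1 := mul_nonneg ha (hx.1 j)
      have h2 := mul_nonneg hb (hy.1 j)
      simp only [Pi.add_apply, Pi.smul_apply, smul_eq_mul]
      linarith
    · have h1 := mul_le_mul_of_nonneg_left (hx.2 K) ha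
      have h2 := mul_le_mul_of_nonneg_left (hy.2 K) hb
      have h3 : ∑ j ∈ K, sgn (g j) * (a • x + b • y) j
          = a * ∑ j ∈ K, sgn (g j) * x j + b * ∑ j ∈ K, sgn (g j) * y j := by
        rw [Finset.mul_sum, Finset.mul_sum, ← Finset.sum_add_distrib]
        refine Finset.sum_congr rfl fun j _ => ?_
        simp only [Pi.add_apply, Pi.smul_apply, smul_eq_mul]; ring
      rw [h3]
      refine (add_le_add h1 h2).trans (le_of_eq ?_)
      rw [← add_mul, hab, one_mul]
  refine convexHull_min ?_ hC hx
  rintro z (hz | ⟨⟨j, b⟩, hp, rfl⟩)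
  · rw [Set.mem_singleton_iff] at hz
    subst hz
    refine ⟨fun j => by simp, fun K => ?_⟩
    simp only [Pi.zero_apply, mul_zero, Finset.sum_const_zero]
    split_ifs <;> norm_num
  · rw [Finset.mem_coe, Finset.mem_inter, mem_signT] at hp
    obtain ⟨hA, hb⟩ := hp
    simp only at hb
    subst hb
    have hval : ∀ k, sgn (g k) * sgnVec n (j, g j) k = if k = j then 1 else 0 := by
      intro k
      rw [sgnVec_apply]
      split_ifs with h
      · rw [h, sgn_mul_sgn]
      · ring
    refine ⟨fun k => ?_, fun K => ?_⟩
    · rw [hval]; split_ifs <;> norm_num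
    · simp only [hval]
      rw [Finset.sum_ite_eq']
      by_cases hj : j ∈ K
      · rw [if_pos hj, if_pos ⟨j, hj, hA⟩]
      · rw [if_neg hj]; split_ifs <;> norm_num

lemma smul_mem_simp0 {A : Finset (Fin n × Bool)} {p : Fin n × Bool} (hp : p ∈ A) {c : ℝ}
    (h0 : 0 ≤ c) (h1 : c ≤ 1) : c • sgnVec n p ∈ simp0 n A := by
  have hz : (0 : Fin n → ℝ) ∈ simp0 n A := subset_convexHull ℝ _ (Or.inl rfl)
  have hv : sgnVec n p ∈ simp0 n A := subset_convexHull ℝ _ (Or.inr ⟨p, hp, rfl⟩)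
  have := (convex_convexHull ℝ ({0} ∪ sgnVec n '' ↑A)) hz hv (sub_nonneg.2 h1) h0 (by ring)
  simpa [simp0] using this

lemma zero_mem_cubeT (T : Finset (Fin n × Bool)) : (0 : Fin n → ℝ) ∈ cubeT n T := by
  rw [cubeT, Set.mem_finsetSum]
  exact ⟨fun _ => 0, fun _ => subset_convexHull ℝ _ (Or.inl rfl), by simp⟩

/-- The vertex of the cube opposite to the origin. -/
lemma corner_mem_cubeT : (fun j => sgn (g j)) ∈ cubeT n (signT g) := by
  rw [cubeT, Set.mem_finsetSum]
  refine ⟨fun p => sgnVec n p, fun _ => subset_convexHull ℝ _ (Or.inr rfl), ?_⟩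
  rw [signT, Finset.sum_image fun a _ b _ hab => (Prod.mk.inj hab).1]
  funext k
  simp [Finset.sum_apply, sgnVec_apply]

lemma exists_of_mem_cubeT {b : Fin n → ℝ} (hb : b ∈ cubeT n (signT g)) :
    ∃ c : Fin n → ℝ, (∀ j, 0 ≤ c j ∧ c j ≤ 1) ∧ ∀ j, b j = c j * sgn (g j) := by
  rw [cubeT, Set.mem_finsetSum] at hb
  obtain ⟨f, hf, rfl⟩ := hb
  have hc : ∀ j, ∃ c : ℝ, 0 ≤ c ∧ c ≤ 1 ∧ f (j, g j) = c • sgnVec n (j, g j) := by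
    intro j
    have h := hf (i := (j, g j)) (mem_signT.2 rfl)
    rw [convexHull_pair] at h
    obtain ⟨a, c, ha, hc, hac, h⟩ := h
    exact ⟨c, hc, by linarith, by rw [← h]; simp⟩
  choose c h0 h1 h2 using hc
  refine ⟨c, fun j => ⟨h0 j, h1 j⟩, fun k => ?_⟩
  rw [signT, Finset.sum_image fun a _ b _ hab => (Prod.mk.inj hab).1]
  simp [Finset.sum_apply, h2, sgnVec_apply]

/-- Hall's theorem: the degree vectors of admissible partial assignments are the integer points
of the polymatroid of the family. -/
lemma exists_assignment (y : Fin n → ℕ)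
    (hy : ∀ K : Finset (Fin n), ∑ j ∈ K, y j ≤
      (Finset.univ.filter fun i : Fin m => ∃ j ∈ K, (j, g j) ∈ S i).card) :
    ∃ φ : Fin m → Option (Fin n), (∀ i, allowed S g i (φ i)) ∧ colDeg φ = y := by
  classical
  let t : (Σ j : Fin n, Fin (y j)) → Finset (Fin m) :=
    fun p => Finset.univ.filter fun i => (p.1, g p.1) ∈ S i
  obtain ⟨f, hf, hft⟩ := (Finset.all_card_le_biUnion_card_iff_exists_injective t).1 (by
    intro s
    have h1 : s ⊆ (s.image Sigma.fst).sigma fun _ => Finset.univ := fun p hp =>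
      Finset.mem_sigma.2 ⟨Finset.mem_image_of_mem _ hp, Finset.mem_univ _⟩
    refine (Finset.card_le_card h1).trans ?_
    rw [Finset.card_sigma]
    simp only [Finset.card_univ, Fintype.card_fin]
    refine (hy _).trans (Finset.card_le_card fun i hi => ?_)
    obtain ⟨j, hj, hji⟩ := (Finset.mem_filter.1 hi).2
    obtain ⟨p, hp, rfl⟩ := Finset.mem_image.1 hj
    exact Finset.mem_biUnion.2 ⟨p, hp, by simpa [t] using hji⟩)
  have hφ : ∀ i, ∃ k : Option (Fin n), ∀ j, k = some j ↔ ∃ p, f p = i ∧ p.1 = j := by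
    intro i
    by_cases h : ∃ p, f p = i
    · obtain ⟨p, rfl⟩ := h
      refine ⟨some p.1, fun j => ⟨fun hj => ⟨p, rfl, Option.some.inj hj⟩, ?_⟩⟩
      rintro ⟨q, hq, rfl⟩
      rw [hf hq]
    · refine ⟨none, fun j => ⟨fun h => (by cases h), ?_⟩⟩
      rintro ⟨p, hp, -⟩
      exact absurd ⟨p, hp⟩ h
  choose φ hφ using hφ
  refine ⟨φ, fun i j hij => ?_, funext fun j => ?_⟩
  · obtain ⟨p, rfl, rfl⟩ := (hφ i j).1 hij
    simpa [t] using hft p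
  · have : (Finset.univ.filter fun i => φ i = some j) =
        Finset.univ.image fun a : Fin (y j) => f ⟨j, a⟩ := by
      ext i
      simp only [Finset.mem_filter, Finset.mem_univ, true_and, Finset.mem_image, hφ]
      constructor
      · rintro ⟨⟨j', a⟩, hp, rfl⟩; exact ⟨a, hp⟩
      · rintro ⟨a, ha⟩; exact ⟨_, ha, rfl⟩
    rw [colDeg, this, Finset.card_image_of_injective, Finset.card_univ, Fintype.card_fin]
    intro a b hab
    simpa using hf hab

/-- The lattice point of `P_T - □_T` belonging to a degree vector. -/
def pointOf (g : Fin n → Bool) (y : Fin n → ℕ) : Fin n → ℝ := fun j => sgn (g j) * ((y j : ℝ) - 1)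

lemma pointOf_mem {y : Fin n → ℕ} (hy : y ∈ degSet (allowed S g)) :
    pointOf g y ∈ mdiff (∑ i, simp0 n (S i ∩ signT g)) (cubeT n (signT g)) ∩ latt n := by
  obtain ⟨hpos, φ, hφ, rfl⟩ := hy
  refine ⟨fun b hb => ?_, fun j => ?_⟩
  · obtain ⟨c, hc, hbc⟩ := exists_of_mem_cubeT g hb
    -- in each column one distinguished row carries the cube coordinate, the others weight one
    have hs : ∀ j, ∃ i, φ i = some j := fun j => by
      obtain ⟨i, hi⟩ := Finset.card_pos.1 (hpos j)
      exact ⟨i, by simpa using hi⟩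
    choose s hs using hs
    let d : Fin m → Fin n → ℝ := fun i j => if i = s j then c j else 1
    rw [Set.mem_fintype_sum]
    refine ⟨fun i => (φ i).elim 0 fun j => d i j • sgnVec n (j, g j), fun i => ?_, ?_⟩
    · cases hi : φ i with
      | none => simp only [hi]; exact subset_convexHull ℝ _ (Or.inl rfl)
      | some j =>
        simp only [hi]
        refine smul_mem_simp0 (Finset.mem_inter.2 ⟨hφ i j hi, mem_signT.2 rfl⟩) ?_ ?_
        · simp only [d]; split_ifs
          · exact (hc j).1
          · norm_num
        · simp only [d]; split_ifs
          · exact (hc j).2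
          · norm_num
    · funext k
      rw [Finset.sum_apply, Pi.add_apply, hbc, pointOf]
      have h1 : ∀ i, ((φ i).elim (0 : Fin n → ℝ) fun j => d i j • sgnVec n (j, g j)) k
          = sgn (g k) * ((if φ i = some k then (1 : ℝ) else 0) +
            if i = s k then c k - 1 else 0) := by
        intro i
        cases hi : φ i with
        | none =>
          have : i ≠ s k := by rintro rfl; rw [hs] at hi; cases hi
          simp [this]
        | some j =>
          simp only [Option.elim, Pi.smul_apply, smul_eq_mul, sgnVec_apply, Option.some.injEq]
          by_cases hkj : k = j
          · subst hkj
            simp only [d]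
            split_ifs <;> simp [mul_comm]
          · have : i ≠ s k := by
              rintro rfl
              rw [hs] at hi
              exact hkj (Option.some.inj hi)
            simp [hkj, this, Ne.symm (a := k) hkj]
      rw [Finset.sum_congr rfl fun i _ => h1 i, ← Finset.mul_sum, Finset.sum_add_distrib,
        ← colDeg_eq_sum]
      simp
      ring
  · refine ⟨if g j then (colDeg φ j : ℤ) - 1 else -((colDeg φ j : ℤ) - 1), ?_⟩
    cases h : g j <;> simp [pointOf, sgn, h]

lemma exists_of_mem_mdiff {x : Fin n → ℝ}
    (hx : x ∈ mdiff (∑ i, simp0 n (S i ∩ signT g)) (cubeT n (signT g)) ∩ latt n) :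
    ∃ y ∈ degSet (allowed S g), pointOf g y = x := by
  obtain ⟨hx, hl⟩ := hx
  have h0 := hx 0 (zero_mem_cubeT _)
  have h1 := hx _ (corner_mem_cubeT g)
  rw [add_zero, Set.mem_fintype_sum] at h0
  rw [Set.mem_fintype_sum] at h1
  obtain ⟨f, hf, hfx⟩ := h0
  obtain ⟨f', hf', hfx'⟩ := h1
  have hnn : ∀ j, 0 ≤ sgn (g j) * x j := fun j => by
    rw [← hfx, Finset.sum_apply, Finset.mul_sum]
    exact Finset.sum_nonneg fun i _ => (simp0_bound g (hf i)).1 j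
  have hz : ∀ j, ∃ k : ℕ, sgn (g j) * x j = k := fun j => by
    obtain ⟨z, hz⟩ := hl j
    have h2 : ∃ z' : ℤ, sgn (g j) * x j = z' := by
      cases h : g j
      · exact ⟨-z, by simp [sgn, hz]⟩
      · exact ⟨z, by simp [sgn, hz]⟩
    obtain ⟨z', hz'⟩ := h2
    have h3 : 0 ≤ z' := by
      have := hnn j
      rw [hz'] at this
      exact_mod_cast this
    obtain ⟨k, rfl⟩ := Int.eq_ofNat_of_zero_le h3
    exact ⟨k, by rw [hz']; simp⟩
  choose k hk using hz
  refine ⟨fun j => k j + 1, ⟨fun j => Nat.le_add_left 1 (k j), exists_assignment S g _ fun K => ?_⟩, ?_⟩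
  · have h2 : ∑ j ∈ K, ((k j + 1 : ℕ) : ℝ) = ∑ j ∈ K, sgn (g j) * ∑ i, f' i j := by
      refine Finset.sum_congr rfl fun j _ => ?_
      have h3 := congrFun hfx' j
      rw [Finset.sum_apply] at h3
      rw [h3, Pi.add_apply, mul_add, hk, sgn_mul_sgn]
      push_cast; rfl
    have h3 : ∑ j ∈ K, sgn (g j) * ∑ i, f' i j
        ≤ ∑ i : Fin m, if ∃ j ∈ K, (j, g j) ∈ S i then (1 : ℝ) else 0 := by
      simp only [Finset.mul_sum]
      rw [Finset.sum_comm]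
      exact Finset.sum_le_sum fun i _ => (simp0_bound g (hf' i)).2 K
    rw [← h2] at h3
    rw [Finset.sum_boole] at h3
    exact_mod_cast h3
  · funext j
    simp only [pointOf]
    push_cast
    rw [add_sub_cancel_right, ← hk, ← mul_assoc, sgn_mul_sgn, one_mul]

lemma ncard_lattice :
    (mdiff (∑ i, simp0 n (S i ∩ signT g)) (cubeT n (signT g)) ∩ latt n).ncard =
      (degSet (allowed S g)).ncard := by
  refine (Set.ncard_congr (fun y _ => pointOf g y) (fun y hy => pointOf_mem S g hy) ?_ ?_).symm
  · intro y y' _ _ h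
    funext j
    have h1 := congrFun h j
    simp only [pointOf] at h1
    have h2 := congrArg (fun r => sgn (g j) * r) h1
    simp only [← mul_assoc, sgn_mul_sgn, one_mul] at h2
    have h3 : (y j : ℝ) = y' j := by linarith
    exact_mod_cast h3
  · intro x hx
    obtain ⟨y, hy, h⟩ := exists_of_mem_mdiff S g hx
    exact ⟨y, hy, h⟩

/-- The indicator sequence of a set of rows. -/
def indic (M : Finset (Fin m)) : Fin m → ℕ := fun i => if i ∈ M then 1 else 0

lemma indic_mem {M : Finset (Fin m)} (hM : M ∈ matchSet (allowed S g)) :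
    indic M ∈ draconian n m S (signT g) := by
  have hcard : M.card = n := by
    obtain ⟨φ, -, h2, h3⟩ := hM
    simpa using card_of_colDeg_one h2 h3
  obtain ⟨φ, h1, h2, h3⟩ := hM
  refine ⟨by simp [indic, hcard], fun I _ => ?_⟩
  have hsum : ∑ i ∈ I, indic M i = (I ∩ M).card := by
    simp [indic, Finset.sum_ite_mem]
  rw [hsum]
  have hex : ∀ i ∈ I ∩ M, ∃ j, φ i = some j := fun i hi =>
    Option.ne_none_iff_exists'.1 ((h3 i).1 (Finset.mem_inter.1 hi).2)
  rcases (I ∩ M).eq_empty_or_nonempty with he | ⟨i₀, hi₀⟩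
  · simp [he]
  have : Nonempty (Fin n) := ⟨(hex i₀ hi₀).choose⟩
  choose! σ hσ using hex
  refine Finset.card_le_card_of_injOn (fun i => (σ i, g (σ i))) (fun i hi => ?_) ?_
  · have hi' := Finset.mem_inter.1 (Finset.mem_coe.1 hi)
    refine Finset.mem_coe.2 (Finset.mem_biUnion.2 ⟨i, hi'.1, Finset.mem_inter.2 ⟨?_, ?_⟩⟩)
    · exact h1 i _ (hσ i hi)
    · exact mem_signT.2 rfl
  · intro i hi i' hi' h
    have h4 : σ i = σ i' := (Prod.mk.inj h).1
    have h5 := hσ i hi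
    have h6 := hσ i' hi'
    rw [h4] at h5
    obtain ⟨a, ha⟩ := Finset.card_eq_one.1 (h2 (σ i'))
    have h7 : i ∈ ({a} : Finset (Fin m)) := ha ▸ by simpa using h5
    have h8 : i' ∈ ({a} : Finset (Fin m)) := ha ▸ by simpa using h6
    rw [Finset.mem_singleton.1 h7, Finset.mem_singleton.1 h8]

/-- Hall's theorem: the support of a draconian `0/1`-sequence can be matched. -/
lemma support_mem {a : Fin m → ℕ} (ha : ∀ i, a i ≤ 1) (hd : a ∈ draconian n m S (signT g)) :
    (Finset.univ.filter fun i => a i = 1) ∈ matchSet (allowed S g) := by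
  classical
  obtain ⟨hsum, hd⟩ := hd
  set M : Finset (Fin m) := Finset.univ.filter fun i => a i = 1 with hM
  have haM : ∀ i ∈ M, a i = 1 := fun i hi => (Finset.mem_filter.1 hi).2
  obtain ⟨f, hf, hft⟩ := (Finset.all_card_le_biUnion_card_iff_exists_injective
      fun i : M => S i ∩ signT g).1 (by
    intro s
    rcases s.eq_empty_or_nonempty with rfl | hs
    · simp
    have h := hd (s.image Subtype.val) (hs.image _)
    rw [Finset.sum_image fun x _ y _ h => Subtype.ext h,
      Finset.sum_congr rfl fun i _ => haM i.1 i.2] at h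
    simpa [Finset.image_biUnion] using h)
  have hcard : M.card = n := by
    rw [← hsum, hM, Finset.card_filter]
    refine Finset.sum_congr rfl fun i _ => ?_
    have := ha i
    split_ifs <;> omega
  have hinj : Function.Injective fun i : M => (f i).1 := by
    intro i i' h
    apply hf
    have e1 := mem_signT.1 (Finset.mem_inter.1 (hft i)).2
    have e2 := mem_signT.1 (Finset.mem_inter.1 (hft i')).2
    simp only at h
    exact Prod.ext h (by rw [e1, e2, h])
  have hbij : Function.Bijective fun i : M => (f i).1 :=
    (Fintype.bijective_iff_injective_and_card _).2 ⟨hinj, by simp [hcard]⟩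
  refine ⟨fun i => if h : i ∈ M then some (f ⟨i, h⟩).1 else none, fun i j hij => ?_,
    fun j => ?_, fun i => ?_⟩
  · by_cases h : i ∈ M
    · simp only [h, dite_true, Option.some.injEq] at hij
      have h1 := Finset.mem_inter.1 (hft ⟨i, h⟩)
      have h2 := mem_signT.1 h1.2
      subst hij
      rw [← h2]
      exact h1.1
    · simp [h] at hij
  · obtain ⟨i, hi⟩ := hbij.2 j
    refine Finset.card_eq_one.2 ⟨i.1, ?_⟩
    ext i'
    simp only [Finset.mem_filter, Finset.mem_univ, true_and, Finset.mem_singleton]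
    constructor
    · intro h
      by_cases h' : i' ∈ M
      · simp only [h', dite_true, Option.some.injEq] at h
        exact congrArg Subtype.val (hinj (h.trans hi.symm) : (⟨i', h'⟩ : M) = i)
      · simp [h'] at h
    · rintro rfl
      simp only [i.2, dite_true, Option.some.injEq]
      exact hi
  · by_cases h : i ∈ M <;> simp [h]

lemma ncard_draconian :
    (matchSet (allowed S g)).ncard =
      {a : Fin m → ℕ | (∀ i, a i ≤ 1) ∧ a ∈ draconian n m S (signT g)}.ncard := by
  refine Set.ncard_congr (fun M _ => indic M) (fun M hM => ⟨fun i => ?_, indic_mem S g hM⟩) ?_ ?_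
  · simp only [indic]; split_ifs <;> norm_num
  · intro M M' _ _ h
    ext i
    have := congrFun h i
    simp only [indic] at this
    by_cases h1 : i ∈ M <;> by_cases h2 : i ∈ M' <;> simp_all
  · rintro a ⟨ha, hd⟩
    refine ⟨_, support_mem S g ha hd, funext fun i => ?_⟩
    have := ha i
    simp only [indic, Finset.mem_filter, Finset.mem_univ, true_and]
    split_ifs <;> omega

end Geometry

/-- If `P_T := Δ⁰_{S_1∩T} + ⋯ + Δ⁰_{S_m∩T}` (with `S_i` admissible, `T ∈ AdS_n`)
is `n`-dimensional, then `|(P_T − □_T) ∩ ℤ^n| = |D(P_T) ∩ {0,1}^m|`. -/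
theorem stmt8 (n m : ℕ) (S : Fin m → Finset (Fin n × Bool)) (hS : ∀ i, Adm n (S i))
    (T : Finset (Fin n × Bool)) (hT : AdSn n T)
    (PT : Set (Fin n → ℝ)) (hPT : PT = ∑ i : Fin m, simp0 n (S i ∩ T))
    (hdim : affineSpan ℝ PT = ⊤) :
    (mdiff PT (cubeT n T) ∩ latt n).ncard =
      {a : Fin m → ℕ | (∀ i, a i ≤ 1) ∧ a ∈ draconian n m S T}.ncard := by
  obtain ⟨g, rfl⟩ := hT.exists_signs
  subst hPT
  exact (ncard_lattice S g).trans
    ((ncard_degSet_eq fun i j h => by cases h).trans (ncard_draconian S g))
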